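/- For each positive integer δ, the combinatorial logarithmic Severi degree Q^{d,δ} is quadratic in d for d sufficiently large: there exist rational numbers a, b, c and a natural number d₀ such that Q^{d,δ} = a·d² + b·d + c for all d ≥ d₀. -/

import Mathlib

open scoped Classical

/-- A quadruple `(a, b, w, i)` in the index set `X`: `a ≤ i < b`, `w ≥ 1`,
and the edge is not short. -/
def ValidX (x : ℕ × ℕ × ℕ × ℕ) : Prop :=
  x.1 ≤ x.2.2.2 ∧ x.2.2.2 < x.2.1 ∧ 1 ≤ x.2.2.1 ∧ ¬ (x.2.1 = x.1 + 1 ∧ x.2.2.1 = 1)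

/-- A finitely supported function `D : X → ℕ` encoding a long-edge graph with
a distribution: `D (a,b,w,i)` counts the edges with endpoints `a < b`, weight `w`,
assigned to the interval `[i, i+1]`. -/
def IsEncoding (D : (ℕ × ℕ × ℕ × ℕ) →₀ ℕ) : Prop :=
  ∀ x ∈ D.support, ValidX x

/-- The cogenus `δ(D) = ∑ D(a,b,w,i) ((b−a)w − 1)`. -/
def cogD (D : (ℕ × ℕ × ℕ × ℕ) →₀ ℕ) : ℕ :=
  ∑ x ∈ D.support, D x * ((x.2.1 - x.1) * x.2.2.1 - 1)

/-- `w_j(D)`: total weight over the interval `[j, j+1]`. -/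
def wjD (D : (ℕ × ℕ × ℕ × ℕ) →₀ ℕ) (j : ℕ) : ℕ :=
  ∑ x ∈ D.support.filter (fun x => x.1 ≤ j ∧ j < x.2.1), x.2.2.1 * D x

/-- `m_j(D)`: number of edges assigned to the interval `[j, j+1]`. -/
def mjD (D : (ℕ × ℕ × ℕ × ℕ) →₀ ℕ) (j : ℕ) : ℕ :=
  ∑ x ∈ D.support.filter (fun x => x.2.2.2 = j), D x

/-- `D` is allowable for `d`. -/
def AllowD (d : ℕ) (D : (ℕ × ℕ × ℕ × ℕ) →₀ ℕ) : Prop :=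
  (∀ x ∈ D.support, x.2.1 ≤ d + 1) ∧
    (∀ x ∈ D.support, x.2.1 = d + 1 → x.2.2.1 = 1) ∧
    ∀ j : ℕ, wjD D j ≤ j

/-- The multiplicity `μ(D) = ∏ w^{2·D(a,b,w,i)}`. -/
noncomputable def muD (D : (ℕ × ℕ × ℕ × ℕ) →₀ ℕ) : ℚ :=
  ∏ x ∈ D.support, (x.2.2.1 : ℚ) ^ (2 * D x)

/-- `α(D) = ∏ (D(a,b,w,i))!`. -/
noncomputable def alphaD (D : (ℕ × ℕ × ℕ × ℕ) →₀ ℕ) : ℚ :=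
  ∏ x ∈ D.support, (Nat.factorial (D x) : ℚ)

/-- `N^d(D) = (μ(D)/α(D)) ∏_{j∈ℕ} (j − w_j(D) + m_j(D))_{m_j(D)}` if `D` is allowable
for `d`, and `0` otherwise. -/
noncomputable def Nd (d : ℕ) (D : (ℕ × ℕ × ℕ × ℕ) →₀ ℕ) : ℚ :=
  if AllowD d D then
    (muD D / alphaD D) *
      ∏ᶠ j : ℕ, (((descPochhammer ℤ (mjD D j)).eval
        ((j : ℤ) - (wjD D j : ℤ) + (mjD D j : ℤ)) : ℤ) : ℚ)
  else 0

/-- The combinatorial Severi degree `N^{d,δ}`. -/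
noncomputable def NSev (d : ℕ) (δ : ℕ) : ℚ :=
  if δ = 0 then 1
  else ∑ᶠ (D : (ℕ × ℕ × ℕ × ℕ) →₀ ℕ) (_ : IsEncoding D ∧ cogD D = δ), Nd d D

/-- The combinatorial logarithmic Severi degree
`Q^{d,δ} = ∑ (−1)^{p−1}/p · N^{d,δ_1} ⋯ N^{d,δ_p}`, summed over ordered sequences of
positive integers with `δ_1 + ⋯ + δ_p = δ`. -/
noncomputable def QSev (d : ℕ) (δ : ℕ) : ℚ :=
  ∑ᶠ (l : List ℕ) (_ : l.sum = δ ∧ ∀ i ∈ l, 0 < i),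
    (-1 : ℚ) ^ (l.length - 1) / (l.length : ℚ) * (l.map (NSev d)).prod

/-!
The graded generating series of the `N^{d,δ}` is a specialisation of a series `Z` in one variable
per edge, and passing to logarithmic derivatives turns `δ Q^{d,δ}` into a sum of contributions of
single graphs. If a vertex separates a graph, then `Z` factors there, so that graph contributes
nothing; hence a contributing graph of cogenus `δ` spans at most `δ + 1` units. Translating a
graph by `k` replaces the falling factorials `(j - w_j + m_j)_{m_j}` by their values with `j + k`
in place of `j`. These are the coefficients of a family of series which depends exponentially on the
shift, because it satisfies a linear recursion, so its logarithmic derivative is affine in `k`. The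
graphs which are new in degree `d + 1` reach the vertex `d + 1` or beyond; the contributing ones
thus lie in a window which moves with `d`, so the first difference of `δ Q^{d,δ}` is eventually
affine in `d`.
-/

section LogDerivative

variable {R A B : Type*} [CommRing R] [CommRing A] [CommRing B] [Algebra R A] [Algebra R B]

/-- The logarithmic derivative `E a / a` of `a` along a derivation `E`; meaningful only for a
unit `a`, since `Ring.inverse` is zero elsewhere. -/
noncomputable def dlog (E : Derivation R A A) (a : A) : A :=
  E a * Ring.inverse a

variable {E : Derivation R A A} {a b : A}

lemma dlog_mul_self (E : Derivation R A A) (ha : IsUnit a) : dlog E a * a = E a := by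
  rw [dlog, Ring.inverse_mul_cancel_right _ _ ha]

lemma dlog_eq_of_mul_eq {g : A} (ha : IsUnit a) (h : g * a = E a) : dlog E a = g :=
  ha.mul_right_cancel ((dlog_mul_self E ha).trans h.symm)

lemma dlog_mul (E : Derivation R A A) (ha : IsUnit a) (hb : IsUnit b) :
    dlog E (a * b) = dlog E a + dlog E b := by
  refine dlog_eq_of_mul_eq (ha.mul hb) ?_
  rw [E.leibniz, smul_eq_mul, smul_eq_mul]
  linear_combination b * dlog_mul_self E ha + a * dlog_mul_self E hb

lemma map_dlog (f : A →+* B) {E' : Derivation R B B} (hf : ∀ x, f (E x) = E' (f x))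
    (ha : IsUnit a) : f (dlog E a) = dlog E' (f a) := by
  symm
  refine dlog_eq_of_mul_eq (ha.map f) ?_
  rw [← map_mul, dlog_mul_self E ha, hf]

lemma dlog_sub_dlog_mem (I : Ideal A) (hI : ∀ x ∈ I, E x ∈ I) (ha : IsUnit a) (hb : IsUnit b)
    (hab : a - b ∈ I) : dlog E a - dlog E b ∈ I := by
  have h : a * (dlog E a - dlog E b) = E (a - b) - (a - b) * dlog E b := by
    rw [map_sub]
    linear_combination dlog_mul_self E ha - dlog_mul_self E hb
  rw [← Ideal.unit_mul_mem_iff_mem I ha, h]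
  exact I.sub_mem (hI _ hab) (I.mul_mem_right _ hab)

end LogDerivative

section EulerDerivation

variable {σ R : Type*} [CommRing R]

/-- The Euler derivation `∑ c_x X_x ∂/∂X_x` on power series in the variables `X_x`, which
multiplies each coefficient by the `c`-weight of its monomial. -/
noncomputable def eulerDeriv (R : Type*) [CommRing R] (c : σ → ℕ) :
    Derivation R (MvPowerSeries σ R) (MvPowerSeries σ R) :=
  Derivation.mk'
    { toFun := fun φ D => (Finsupp.weight c D : R) * MvPowerSeries.coeff D φ
      map_add' := fun φ ψ => MvPowerSeries.ext fun D => mul_add _ _ _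
      map_smul' := fun r φ => MvPowerSeries.ext fun D => mul_left_comm _ _ _ }
    fun φ ψ => MvPowerSeries.ext fun D => by
      change (Finsupp.weight c D : R) * MvPowerSeries.coeff D (φ * ψ) = _
      simp only [smul_eq_mul, map_add, MvPowerSeries.coeff_mul, mul_comm ψ, Finset.mul_sum,
        ← Finset.sum_add_distrib]
      refine Finset.sum_congr rfl fun p hp => ?_
      change _ = MvPowerSeries.coeff p.1 φ * (Finsupp.weight c p.2 * MvPowerSeries.coeff p.2 ψ) +
        Finsupp.weight c p.1 * MvPowerSeries.coeff p.1 φ * MvPowerSeries.coeff p.2 ψ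
      rw [← Finset.HasAntidiagonal.mem_antidiagonal.mp hp, map_add]
      push_cast
      ring

@[simp]
lemma coeff_eulerDeriv (c : σ → ℕ) (φ : MvPowerSeries σ R) (D : σ →₀ ℕ) :
    MvPowerSeries.coeff D (eulerDeriv R c φ) =
      (Finsupp.weight c D : R) * MvPowerSeries.coeff D φ :=
  rfl

lemma coeff_eulerDeriv_unit (f : PowerSeries R) (n : ℕ) :
    PowerSeries.coeff n (eulerDeriv R (fun _ : Unit => 1) f) = n * PowerSeries.coeff n f := by
  simp [PowerSeries.coeff, Finsupp.weight_single]

lemma eulerDeriv_unit_eq (f : PowerSeries R) :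
    eulerDeriv R (fun _ : Unit => 1) f = PowerSeries.X * PowerSeries.derivative R f := by
  ext n
  rw [coeff_eulerDeriv_unit]
  cases n with
  | zero => simp
  | succ n => rw [PowerSeries.coeff_succ_X_mul, PowerSeries.coeff_derivative]; push_cast; ring

end EulerDerivation

section Logarithm

open PowerSeries

variable {R : Type*} [CommRing R]

section Algebra

variable [Algebra ℚ R]

lemma derivative_log_mul_one_add_X : derivative R (log R) * (1 + X) = 1 := by
  ext n
  rw [deriv_log, mul_add, mul_one, map_add]
  cases n with
  | zero => simp
  | succ n => rw [coeff_succ_mul_X]; simp [coeff_one, pow_succ]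

lemma derivative_logOf_mul_self {f : PowerSeries R} (hf : constantCoeff f = 1) :
    derivative R (logOf f) * f = derivative R f := by
  have hs : HasSubst (f - 1) := HasSubst.of_constantCoeff_zero' (by simp [hf])
  have hlog : (derivative R (log R)).subst (f - 1) * f = 1 := by
    have h := congrArg (substAlgHom (R := R) hs) derivative_log_mul_one_add_X
    simpa only [map_mul, map_add, map_one, substAlgHom_X, coe_substAlgHom,
      add_sub_cancel] using h
  rw [logOf_eq, derivative_subst hs, mul_right_comm, hlog, one_mul]
  simp

lemma dlog_eulerDeriv_eq_eulerDeriv_logOf {f : PowerSeries R} (hf : constantCoeff f = 1) :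
    dlog (eulerDeriv R fun _ : Unit => 1) f = eulerDeriv R (fun _ : Unit => 1) (logOf f) := by
  refine dlog_eq_of_mul_eq (isUnit_iff_constantCoeff.mpr (by simp [hf])) ?_
  rw [eulerDeriv_unit_eq, eulerDeriv_unit_eq, mul_assoc, derivative_logOf_mul_self hf]

end Algebra

lemma coeff_logOf {f : PowerSeries ℚ} (hf : constantCoeff f = 1) (n : ℕ) :
    coeff n (logOf f) =
      ∑ p ∈ Finset.range (n + 1), (-1 : ℚ) ^ (p + 1) / p * coeff n ((f - 1) ^ p) := by
  have hs : HasSubst (f - 1) := HasSubst.of_constantCoeff_zero' (by simp [hf])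
  rw [logOf_eq, coeff_subst' hs, finsum_eq_sum_of_support_subset (s := Finset.range (n + 1))]
  · refine Finset.sum_congr rfl fun p _ => ?_
    rw [coeff_log]
    split_ifs with hp <;> simp [hp]
  · intro p hp
    by_contra hpn
    refine hp ?_
    have hX : X ^ p ∣ (f - 1) ^ p := pow_dvd_pow_of_dvd (X_dvd_iff.mpr (by simp [hf])) p
    have hlt : n < p := by simpa using hpn
    simp only [X_pow_dvd_iff.mp hX n hlt, smul_zero]

lemma coeff_pow_eq_sum_antidiagonalTuple (g : PowerSeries R) (p n : ℕ) :
    coeff n (g ^ p) = ∑ t ∈ Finset.Nat.antidiagonalTuple p n, ∏ i, coeff (t i) g := by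
  have hpow : g ^ p = ∏ _i : Fin p, g := by simp
  rw [hpow, coeff_prod]
  refine Finset.sum_equiv Finsupp.equivFunOnFinite (fun t => ?_) fun t _ => rfl
  simp [Finset.Nat.mem_antidiagonalTuple]

lemma prod_map_coeff_ofFn {f : PowerSeries R} (hf : constantCoeff f = 1) {p : ℕ}
    (t : Fin p → ℕ) :
    (if ∀ i ∈ List.ofFn t, 0 < i then ((List.ofFn t).map fun i => coeff i f).prod else 0) =
      ∏ i, coeff (t i) (f - 1) := by
  split_ifs with ht
  · rw [List.map_ofFn, List.prod_ofFn]
    refine Finset.prod_congr rfl fun i _ => ?_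
    have hi : t i ≠ 0 := (ht (t i) (List.mem_ofFn.mpr ⟨i, rfl⟩)).ne'
    simp [coeff_one, hi]
  · obtain ⟨i, hi⟩ : ∃ i, t i = 0 := by simpa [List.mem_ofFn] using ht
    exact (Finset.prod_eq_zero (Finset.mem_univ i) (by simp [hi, hf])).symm

lemma finsum_log_term_ofFn {f : PowerSeries ℚ} (hf : constantCoeff f = 1) (n : ℕ) {p : ℕ}
    (t : Fin p → ℕ) :
    (∑ᶠ (_ : (List.ofFn t).sum = n ∧ ∀ i ∈ List.ofFn t, 0 < i),
      (-1 : ℚ) ^ ((List.ofFn t).length - 1) / (List.ofFn t).length *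
        ((List.ofFn t).map fun i => coeff i f).prod) =
    if ∑ i, t i = n then (-1 : ℚ) ^ (p + 1) / p * ∏ i, coeff (t i) (f - 1) else 0 := by
  rw [finsum_eq_if, ite_and, ← prod_map_coeff_ofFn hf, List.sum_ofFn, List.length_ofFn]
  cases p with
  | zero => simp
  | succ p => simp [pow_succ]

lemma coeff_logOf_eq_finsum_list {f : PowerSeries ℚ} (hf : constantCoeff f = 1) (n : ℕ) :
    coeff n (logOf f) = ∑ᶠ (l : List ℕ) (_ : l.sum = n ∧ ∀ i ∈ l, 0 < i),
      (-1 : ℚ) ^ (l.length - 1) / l.length * (l.map fun i => coeff i f).prod := by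
  have hsupp (s : Σ p, Fin p → ℕ) (hs : s ∉ (Finset.range (n + 1)).sigma
      fun p => Finset.Nat.antidiagonalTuple p n) :
      ¬ ((List.ofFn s.2).sum = n ∧ ∀ i ∈ List.ofFn s.2, 0 < i) := by
    rintro ⟨hsum, hpos⟩
    refine hs (Finset.mem_sigma.mpr ⟨?_, ?_⟩)
    · have := List.length_le_sum_of_one_le _ hpos
      rw [List.length_ofFn, hsum] at this
      simpa using Nat.lt_succ_of_le this
    · rwa [Finset.Nat.mem_antidiagonalTuple, ← List.sum_ofFn]
  rw [← finsum_comp_equiv List.equivSigmaTuple.symm, finsum_eq_sum_of_support_subset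
      (s := (Finset.range (n + 1)).sigma fun p => Finset.Nat.antidiagonalTuple p n)]
  · rw [coeff_logOf hf, Finset.sum_sigma]
    refine Finset.sum_congr rfl fun p _ => ?_
    rw [coeff_pow_eq_sum_antidiagonalTuple, Finset.mul_sum]
    refine Finset.sum_congr rfl fun t ht => ?_
    exact ((finsum_log_term_ofFn hf n t).trans
      (if_pos (Finset.Nat.mem_antidiagonalTuple.mp ht))).symm
  · intro s hs
    by_contra hns
    exact hs ((finsum_eq_if).trans (if_neg (hsupp s hns)))

end Logarithm

section Grading

variable {σ R : Type*} [CommRing R] {c : σ → ℕ} {T : Set σ}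

/-- The substitution collapsing each variable `X_x` with `x ∈ T` to `t ^ c x` and killing all the
other variables. -/
noncomputable def gradedVar (R : Type*) [CommRing R] (c : σ → ℕ) (T : Set σ) (x : σ) :
    PowerSeries R :=
  if x ∈ T then PowerSeries.X ^ c x else 0

lemma hasSubst_gradedVar (hc : ∀ x ∈ T, c x ≠ 0) (hT : ∀ n, {x ∈ T | c x = n}.Finite) :
    MvPowerSeries.HasSubst (gradedVar R c T) where
  const_coeff x := by
    have h0 : PowerSeries.constantCoeff (gradedVar R c T x) = 0 := by
      unfold gradedVar
      split_ifs with hx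
      · simp [hc x hx]
      · simp
    exact h0 ▸ IsNilpotent.zero
  coeff_zero D := by
    refine (hT (D ())).subset fun x hx => ?_
    by_contra hxT
    refine hx ?_
    have : PowerSeries.coeff (D ()) (gradedVar R c T x) = 0 := by
      unfold gradedVar
      split_ifs with hx'
      · rw [PowerSeries.coeff_X_pow, if_neg fun h => hxT ⟨hx', h.symm⟩]
      · simp
    rwa [PowerSeries.coeff_def (s := D) rfl] at this

lemma prod_gradedVar_pow (D : σ →₀ ℕ) :
    (D.prod fun x n => gradedVar R c T x ^ n) =
      if ↑D.support ⊆ T then PowerSeries.X ^ Finsupp.weight c D else 0 := by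
  split_ifs with hD
  · rw [Finsupp.weight_apply, Finsupp.sum, ← Finset.prod_pow_eq_pow_sum]
    refine Finset.prod_congr rfl fun x hx => ?_
    simp only [gradedVar, if_pos (hD hx), ← pow_mul, smul_eq_mul, mul_comm]
  · obtain ⟨x, hx, hxT⟩ := Set.not_subset.mp hD
    refine Finset.prod_eq_zero hx ?_
    simp only [gradedVar, if_neg hxT, zero_pow (Finsupp.mem_support_iff.mp hx)]

lemma coeff_subst_gradedVar (hc : ∀ x ∈ T, c x ≠ 0) (hT : ∀ n, {x ∈ T | c x = n}.Finite)
    (φ : MvPowerSeries σ R) (n : ℕ) :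
    PowerSeries.coeff n (MvPowerSeries.subst (gradedVar R c T) φ) =
      ∑ᶠ (D : σ →₀ ℕ) (_ : ↑D.support ⊆ T ∧ Finsupp.weight c D = n), MvPowerSeries.coeff D φ := by
  rw [PowerSeries.coeff, MvPowerSeries.coeff_subst (hasSubst_gradedVar hc hT)]
  refine finsum_congr fun D => ?_
  rw [prod_gradedVar_pow, finsum_eq_if, ite_and, ← PowerSeries.coeff,
    apply_ite (PowerSeries.coeff n), PowerSeries.coeff_X_pow]
  simp [eq_comm]

lemma finite_setOf_support_subset_weight_eq (hc : ∀ x ∈ T, c x ≠ 0)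
    (hT : ∀ n, {x ∈ T | c x = n}.Finite) (n : ℕ) :
    {D : σ →₀ ℕ | ↑D.support ⊆ T ∧ Finsupp.weight c D = n}.Finite := by
  let allOnes : MvPowerSeries σ ℤ := fun _ => 1
  refine (MvPowerSeries.coeff_subst_finite (hasSubst_gradedVar (R := ℤ) hc hT) allOnes
    (Finsupp.single () n)).subset fun D hD => ?_
  rw [Function.mem_support, prod_gradedVar_pow, if_pos hD.1, ← PowerSeries.coeff, hD.2,
    PowerSeries.coeff_X_pow, if_pos rfl]
  exact one_ne_zero

lemma subst_gradedVar_eulerDeriv (hc : ∀ x ∈ T, c x ≠ 0) (hT : ∀ n, {x ∈ T | c x = n}.Finite)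
    (φ : MvPowerSeries σ R) :
    MvPowerSeries.subst (gradedVar R c T) (eulerDeriv R c φ) =
      eulerDeriv R (fun _ : Unit => 1) (MvPowerSeries.subst (gradedVar R c T) φ) := by
  refine PowerSeries.ext fun n => ?_
  rw [coeff_eulerDeriv_unit, coeff_subst_gradedVar hc hT, coeff_subst_gradedVar hc hT]
  refine .trans ?_ (mul_finsum_mem' _ _ (finite_setOf_support_subset_weight_eq hc hT n)).symm
  refine finsum_mem_congr rfl fun D hD => ?_
  rw [coeff_eulerDeriv, hD.2]

end Grading

section Splitting

variable {σ R : Type*} [CommRing R]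

lemma coeff_rescale_indicator (S : Set σ) (φ : MvPowerSeries σ R) (D : σ →₀ ℕ) :
    MvPowerSeries.coeff D (MvPowerSeries.rescale (S.indicator 1) φ) =
      if ↑D.support ⊆ S then MvPowerSeries.coeff D φ else 0 := by
  rw [MvPowerSeries.coeff_rescale]
  split_ifs with hD
  · rw [Finsupp.prod, Finset.prod_eq_one, one_mul]
    intro x hx
    simp [hD hx]
  · obtain ⟨x, hx, hxS⟩ := Set.not_subset.mp hD
    rw [Finsupp.prod, Finset.prod_eq_zero hx, zero_mul]
    simp [hxS, Finsupp.mem_support_iff.mp hx]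

lemma rescale_eulerDeriv (a : σ → R) (c : σ → ℕ) (φ : MvPowerSeries σ R) :
    MvPowerSeries.rescale a (eulerDeriv R c φ) = eulerDeriv R c (MvPowerSeries.rescale a φ) := by
  ext D
  simp only [MvPowerSeries.coeff_rescale, coeff_eulerDeriv, mul_left_comm]

lemma coeff_rescale_indicator_mul_compl (S : Set σ) (φ : MvPowerSeries σ R) (D : σ →₀ ℕ) :
    MvPowerSeries.coeff D (MvPowerSeries.rescale (S.indicator 1) φ *
        MvPowerSeries.rescale (Sᶜ.indicator 1) φ) =
      MvPowerSeries.coeff (D.filter (· ∈ S)) φ * MvPowerSeries.coeff (D.filter (· ∉ S)) φ := by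
  rw [MvPowerSeries.coeff_mul,
    Finset.sum_eq_single (D.filter (· ∈ S), D.filter (· ∉ S))]
  · rw [coeff_rescale_indicator, coeff_rescale_indicator, if_pos, if_pos] <;>
      exact fun x hx => (Finset.mem_filter.mp hx).2
  · rintro ⟨A, B⟩ hAB hne
    rw [coeff_rescale_indicator, coeff_rescale_indicator]
    split_ifs with hA hB
    · refine absurd ?_ hne
      rw [← Finset.HasAntidiagonal.mem_antidiagonal.mp hAB, Finsupp.filter_add, Finsupp.filter_add]
      have hAS (x : σ) (hx : x ∉ S) : A x = 0 := by
        by_contra h; exact hx (hA (Finsupp.mem_support_iff.mpr h))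
      have hBS (x : σ) (hx : x ∈ S) : B x = 0 := by
        by_contra h; exact hB (Finsupp.mem_support_iff.mpr h) hx
      ext x <;> by_cases hx : x ∈ S <;> simp [hx, hAS, hBS]
    · rw [mul_zero]
    · rw [zero_mul]
    · rw [zero_mul]
  · intro h
    exact absurd (Finset.HasAntidiagonal.mem_antidiagonal.mpr (Finsupp.filter_add_filter_not D _)) h

/-- The ideal of power series whose coefficients at all monomials dividing `X ^ D` vanish. -/
def vanishingBelow (R : Type*) [CommRing R] (D : σ →₀ ℕ) : Ideal (MvPowerSeries σ R) where
  carrier := {φ | ∀ A ≤ D, MvPowerSeries.coeff A φ = 0}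
  add_mem' hφ hψ A hA := by rw [map_add, hφ A hA, hψ A hA, add_zero]
  zero_mem' _ _ := map_zero _
  smul_mem' χ φ hφ A hA := by
    rw [smul_eq_mul, MvPowerSeries.coeff_mul]
    refine Finset.sum_eq_zero fun p hp => ?_
    have hpA : p.2 ≤ A := by
      rw [← Finset.HasAntidiagonal.mem_antidiagonal.mp hp]
      exact le_add_self
    rw [hφ p.2 (hpA.trans hA), mul_zero]

lemma coeff_dlog_eulerDeriv_congr {c : σ → ℕ} {φ ψ : MvPowerSeries σ R} {D : σ →₀ ℕ}
    (hφ : IsUnit φ) (hψ : IsUnit ψ)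
    (h : ∀ A ≤ D, MvPowerSeries.coeff A φ = MvPowerSeries.coeff A ψ) :
    MvPowerSeries.coeff D (dlog (eulerDeriv R c) φ) =
      MvPowerSeries.coeff D (dlog (eulerDeriv R c) ψ) := by
  rw [← sub_eq_zero, ← map_sub]
  refine dlog_sub_dlog_mem (vanishingBelow R D) (fun χ hχ A hA => ?_) hφ hψ
    (fun A hA => ?_) D le_rfl
  · rw [coeff_eulerDeriv, hχ A hA, mul_zero]
  · rw [map_sub, h A hA, sub_self]

lemma coeff_dlog_eulerDeriv_eq_zero_of_splits {c : σ → ℕ} {φ : MvPowerSeries σ R} {D : σ →₀ ℕ}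
    (S : Set σ) (hφ : IsUnit φ)
    (hsplit : ∀ A ≤ D, MvPowerSeries.coeff A φ =
      MvPowerSeries.coeff (A.filter (· ∈ S)) φ * MvPowerSeries.coeff (A.filter (· ∉ S)) φ)
    (hS : ∃ x ∈ D.support, x ∈ S) (hS' : ∃ x ∈ D.support, x ∉ S) :
    MvPowerSeries.coeff D (dlog (eulerDeriv R c) φ) = 0 := by
  obtain ⟨x, hx, hxS⟩ := hS
  obtain ⟨y, hy, hyS⟩ := hS'
  have hu (S : Set σ) : IsUnit (MvPowerSeries.rescale (S.indicator 1) φ) := hφ.map _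
  rw [coeff_dlog_eulerDeriv_congr hφ ((hu S).mul (hu Sᶜ))
      fun A hA => (hsplit A hA).trans (coeff_rescale_indicator_mul_compl S φ A).symm,
    dlog_mul _ (hu S) (hu Sᶜ), ← map_dlog _ (rescale_eulerDeriv _ c) hφ,
    ← map_dlog _ (rescale_eulerDeriv _ c) hφ, map_add, coeff_rescale_indicator,
    coeff_rescale_indicator, if_neg fun h => hyS (h hy), if_neg fun h => h hx hxS, add_zero]

end Splitting

section Periodic

lemma eq_apply_zero_of_periodic {ι α : Type*} [Finite ι] {f : (ι → ℤ) → α}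
    (hf : ∀ j, Function.Periodic f (Pi.single j 1)) (β : ι → ℤ) : f β = f 0 := by
  cases nonempty_fintype ι
  have hβ : Function.Periodic f (∑ j, β j • Pi.single j 1) :=
    Finset.sum_induction _ (Function.Periodic f) (fun _ _ => Function.Periodic.add_period)
      (fun x => by rw [add_zero]) fun j _ => (hf j).zsmul (β j)
  have hsum : ∑ j, β j • Pi.single j (1 : ℤ) = β := by
    simpa [← Pi.single_smul] using Finset.univ_sum_single β
  rw [hsum] at hβ
  simpa using hβ 0

end Periodic

section ExponentialFamily

/-- The polynomial `(y + 1) (y + 2) ⋯ (y + m)`, in the form `(y + m)_m`. -/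
noncomputable def shiftedRising (m : ℕ) (y : ℤ) : ℤ :=
  (descPochhammer ℤ m).eval (y + m)

lemma shiftedRising_zero (y : ℤ) : shiftedRising 0 y = 1 := by
  simp [shiftedRising]

lemma shiftedRising_sub_shiftedRising (m : ℕ) (y : ℤ) :
    shiftedRising m y - shiftedRising m (y - 1) = m * shiftedRising (m - 1) y := by
  cases m with
  | zero => simp [shiftedRising_zero]
  | succ m =>
    have hfirst : shiftedRising (m + 1) y = (y + m + 1) * shiftedRising m y := by
      simp only [shiftedRising, descPochhammer_succ_left, Polynomial.eval_mul, Polynomial.eval_X,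
        Polynomial.eval_comp, Polynomial.eval_sub, Polynomial.eval_one]
      push_cast
      ring_nf
    have hlast : shiftedRising (m + 1) (y - 1) = shiftedRising m y * y := by
      have harg : y - 1 + ((m + 1 : ℕ) : ℤ) = y + m := by push_cast; ring
      rw [shiftedRising, harg, descPochhammer_succ_right]
      simp [shiftedRising]
    rw [hfirst, hlast, Nat.add_sub_cancel]
    push_cast
    ring

variable {σ ι K : Type*} [Field K]

/-- The multinomial weight `∏ c_x ^ D_x / D_x!`. -/
noncomputable def multinomialWeight (c : σ → K) (D : σ →₀ ℕ) : K :=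
  D.prod fun x n => c x ^ n / n.factorial

/-- The number `m_j(D)` of elements of the multiset `D` located at `j`. -/
noncomputable def localCount (loc : σ → ι) (D : σ →₀ ℕ) (j : ι) : ℕ :=
  Finsupp.weight (fun x => Pi.single (loc x) 1 : σ → ι → ℕ) D j

/-- The factor `(β_j - v_j(D) + m_j(D))_{m_j(D)}` at `j`, where `v(D) = ∑ D_x v_x`. -/
noncomputable def localFactor (loc : σ → ι) (v : σ → ι → ℤ) (β : ι → ℤ) (D : σ →₀ ℕ) (j : ι) : ℤ :=
  shiftedRising (localCount loc D j) (β j - Finsupp.weight v D j)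

variable {c : σ → K} {loc : σ → ι} {v : σ → ι → ℤ}

lemma multinomialWeight_add_single [CharZero K] (A : σ →₀ ℕ) (x : σ) :
    (A x + 1) * multinomialWeight c (A + Finsupp.single x 1) = c x * multinomialWeight c A := by
  have hsupp : (A + Finsupp.single x 1).support ⊆ insert x A.support := fun y hy => by
    rw [Finset.mem_insert, or_iff_not_imp_left]
    intro hyx
    simpa [Finsupp.single_apply, Ne.symm hyx] using hy
  rw [multinomialWeight, multinomialWeight,
    Finsupp.prod_of_support_subset _ hsupp _ (by simp),
    Finsupp.prod_of_support_subset A (Finset.subset_insert x _) _ (by simp),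
    ← Finset.mul_prod_erase _ _ (Finset.mem_insert_self x _),
    ← Finset.mul_prod_erase _ (fun y => c y ^ A y / _) (Finset.mem_insert_self x _),
    ← mul_assoc, ← mul_assoc]
  congr 1
  · have hx : (A x + 1 : K) ≠ 0 := Nat.cast_add_one_ne_zero _
    have hfact : ((A x).factorial : K) ≠ 0 := Nat.cast_ne_zero.mpr (Nat.factorial_ne_zero _)
    simp only [Finsupp.add_apply, Finsupp.single_eq_same, Nat.factorial_succ, pow_succ]
    push_cast
    field_simp
  · refine Finset.prod_congr rfl fun y hy => ?_
    simp [(Finset.ne_of_mem_erase hy).symm]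

lemma localCount_add_single_of_ne (A : σ →₀ ℕ) {x : σ} {j : ι} (hj : loc x ≠ j) :
    localCount loc (A + Finsupp.single x 1) j = localCount loc A j := by
  simp [localCount, Finsupp.weight_single, hj]

lemma localCount_add_single_self (A : σ →₀ ℕ) (x : σ) :
    localCount loc (A + Finsupp.single x 1) (loc x) = localCount loc A (loc x) + 1 := by
  simp [localCount, Finsupp.weight_single]

lemma localFactor_add_single_of_ne (β : ι → ℤ) (A : σ →₀ ℕ) {x : σ} {j : ι} (hj : loc x ≠ j) :
    localFactor loc v β (A + Finsupp.single x 1) j = localFactor loc v (β - v x) A j := by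
  simp [localFactor, localCount_add_single_of_ne A hj, Finsupp.weight_single, sub_sub, add_comm]

lemma localFactor_sub_single_of_ne (β : ι → ℤ) (D : σ →₀ ℕ) {i j : ι} (hj : j ≠ i) :
    localFactor loc v (β - Pi.single i 1) D j = localFactor loc v β D j := by
  simp [localFactor, hj]

lemma localCount_eq_sum [Fintype σ] (loc : σ → ι) (D : σ →₀ ℕ) (j : ι) :
    localCount loc D j = ∑ x with loc x = j, D x := by
  rw [localCount, Finsupp.weight_apply, Finsupp.sum_fintype _ _ (by simp), Finset.sum_apply,
    Finset.sum_filter]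
  refine Finset.sum_congr rfl fun x _ => ?_
  simp [Pi.single_apply, eq_comm]

section Recursion

variable [Fintype σ]

/-- The recursion `U(β) = U(β - e_j) + ∑ c_x X_x U(β - v_x)`, the sum being over the `x` located at
`j`, for families of power series indexed by `β`. -/
def SatisfiesRec (c : σ → K) (loc : σ → ι) (v : σ → ι → ℤ) (U : (ι → ℤ) → MvPowerSeries σ K) :
    Prop :=
  ∀ β j, U β = U (β - Pi.single j 1) +
    ∑ x with loc x = j, MvPowerSeries.monomial (Finsupp.single x 1) (c x) * U (β - v x)

lemma SatisfiesRec.eq_zero [Finite ι] {U : (ι → ℤ) → MvPowerSeries σ K}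
    (hU : SatisfiesRec c loc v U) (h0 : U 0 = 0) (β : ι → ℤ) : U β = 0 := by
  refine MvPowerSeries.ext fun D => ?_
  induction hn : D.degree using Nat.strong_induction_on generalizing D β with
  | _ n ih =>
  have hper (j : ι) : Function.Periodic (fun β => MvPowerSeries.coeff D (U β)) (Pi.single j 1) := by
    intro β
    have hlower : ∑ x with loc x = j, MvPowerSeries.coeff D (MvPowerSeries.monomial
        (Finsupp.single x 1) (c x) * U (β + Pi.single j 1 - v x)) = 0 := by
      refine Finset.sum_eq_zero fun x _ => ?_
      rw [MvPowerSeries.coeff_monomial_mul]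
      split_ifs with hx
      · have hdeg := congrArg Finsupp.degree (tsub_add_cancel_of_le hx)
        rw [map_add, Finsupp.degree_single] at hdeg
        rw [ih (D - Finsupp.single x 1).degree (by omega) _ _ rfl, map_zero, mul_zero]
      · rfl
    have hstep := congrArg (MvPowerSeries.coeff D) (hU (β + Pi.single j 1) j)
    rwa [map_add, map_sum, hlower, add_zero, add_sub_cancel_right] at hstep
  exact (eq_apply_zero_of_periodic hper β).trans (by rw [h0])

end Recursion

variable [Fintype ι]

/-- The generating series `∑ ∏ (c_x X_x) ^ D_x / D_x! · ∏_j (β_j - v_j(D) + m_j(D))_{m_j(D)}` over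
multisets `D`. -/
noncomputable def expSeries (c : σ → K) (loc : σ → ι) (v : σ → ι → ℤ) (β : ι → ℤ) :
    MvPowerSeries σ K :=
  fun D => multinomialWeight c D * ∏ j, (localFactor loc v β D j : K)

lemma coeff_expSeries (β : ι → ℤ) (D : σ →₀ ℕ) :
    MvPowerSeries.coeff D (expSeries c loc v β) =
      multinomialWeight c D * ∏ j, (localFactor loc v β D j : K) :=
  rfl

lemma isUnit_expSeries (β : ι → ℤ) : IsUnit (expSeries c loc v β) := by
  rw [MvPowerSeries.isUnit_iff_constantCoeff, ← MvPowerSeries.coeff_zero_eq_constantCoeff_apply,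
    coeff_expSeries]
  simp [multinomialWeight, localFactor, localCount, shiftedRising_zero]

/-- The common value, up to an integer factor, of the coefficients at `X ^ D` of the terms of the
recursion satisfied by `expSeries` at `j`. -/
noncomputable def reducedCoeff (c : σ → K) (loc : σ → ι) (v : σ → ι → ℤ) (β : ι → ℤ) (D : σ →₀ ℕ)
    (j : ι) : K :=
  multinomialWeight c D *
    (shiftedRising (localCount loc D j - 1) (β j - Finsupp.weight v D j) *
      ∏ i ∈ Finset.univ.erase j, (localFactor loc v β D i : K))

lemma coeff_monomial_mul_expSeries [CharZero K] (β : ι → ℤ) (D : σ →₀ ℕ) (x : σ) :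
    MvPowerSeries.coeff D
        (MvPowerSeries.monomial (Finsupp.single x 1) (c x) * expSeries c loc v (β - v x)) =
      D x * reducedCoeff c loc v β D (loc x) := by
  rw [MvPowerSeries.coeff_monomial_mul]
  split_ifs with hx
  · obtain ⟨A, rfl⟩ := exists_add_of_le hx
    have hprod : ∏ i ∈ Finset.univ.erase (loc x), (localFactor loc v (β - v x) A i : K) =
        ∏ i ∈ Finset.univ.erase (loc x),
          (localFactor loc v β (A + Finsupp.single x 1) i : K) :=
      Finset.prod_congr rfl fun i hi => by
        rw [localFactor_add_single_of_ne β A (Finset.ne_of_mem_erase hi).symm]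
    rw [add_tsub_cancel_left, coeff_expSeries, add_comm _ A, reducedCoeff,
      ← Finset.mul_prod_erase _ _ (Finset.mem_univ (loc x)), hprod, ← mul_assoc,
      ← multinomialWeight_add_single, Finsupp.add_apply, Finsupp.single_eq_same,
      localCount_add_single_self, Nat.add_sub_cancel, localFactor, map_add, Finsupp.weight_single,
      one_smul, Pi.add_apply, Pi.sub_apply, add_comm (Finsupp.weight v A _), sub_sub]
    push_cast
    ring
  · have hDx : D x = 0 := by simpa [Finsupp.single_le_iff] using hx
    rw [hDx, Nat.cast_zero, zero_mul]

lemma coeff_expSeries_sub_coeff_expSeries (β : ι → ℤ) (D : σ →₀ ℕ) (j : ι) :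
    MvPowerSeries.coeff D (expSeries c loc v β) -
        MvPowerSeries.coeff D (expSeries c loc v (β - Pi.single j 1)) =
      localCount loc D j * reducedCoeff c loc v β D j := by
  have hprod : ∏ i ∈ Finset.univ.erase j, (localFactor loc v (β - Pi.single j 1) D i : K) =
      ∏ i ∈ Finset.univ.erase j, (localFactor loc v β D i : K) :=
    Finset.prod_congr rfl fun i hi => by
      rw [localFactor_sub_single_of_ne β D (Finset.ne_of_mem_erase hi)]
  have hdiff := congrArg (Int.cast : ℤ → K)
    (shiftedRising_sub_shiftedRising (localCount loc D j) (β j - Finsupp.weight v D j))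
  push_cast at hdiff
  rw [coeff_expSeries, coeff_expSeries, ← Finset.mul_prod_erase _ _ (Finset.mem_univ j),
    ← Finset.mul_prod_erase _ _ (Finset.mem_univ j), hprod, reducedCoeff,
    localFactor, localFactor, Pi.sub_apply, Pi.single_eq_same, sub_right_comm (β j) 1]
  linear_combination (multinomialWeight c D *
    ∏ i ∈ Finset.univ.erase j, (localFactor loc v β D i : K)) * hdiff

lemma satisfiesRec_expSeries [Fintype σ] [CharZero K] :
    SatisfiesRec c loc v (expSeries c loc v) := by
  refine fun β j => MvPowerSeries.ext fun D => ?_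
  rw [map_add, ← sub_eq_iff_eq_add', coeff_expSeries_sub_coeff_expSeries, localCount_eq_sum,
    map_sum, Nat.cast_sum, Finset.sum_mul]
  refine Finset.sum_congr rfl fun x hx => ?_
  rw [coeff_monomial_mul_expSeries, (Finset.mem_filter.mp hx).2]

/-- Both sides satisfy the same recursion in `β` and agree at `β = 0`. -/
lemma expSeries_add_mul_expSeries_zero [Finite σ] [CharZero K] (β γ : ι → ℤ) :
    expSeries c loc v (β + γ) * expSeries c loc v 0 =
      expSeries c loc v β * expSeries c loc v γ := by
  cases nonempty_fintype σ
  refine sub_eq_zero.mp (SatisfiesRec.eq_zero (c := c) (loc := loc) (v := v)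
    (U := fun β => expSeries c loc v (β + γ) * expSeries c loc v 0 -
      expSeries c loc v β * expSeries c loc v γ) (fun β j => ?_) (by simp [mul_comm]) β)
  have hsum := satisfiesRec_expSeries (c := c) (loc := loc) (v := v) (β + γ) j
  have hβ := satisfiesRec_expSeries (c := c) (loc := loc) (v := v) β j
  simp only [mul_sub, Finset.sum_sub_distrib, ← mul_assoc, ← Finset.sum_mul,
    sub_add_eq_add_sub]
  linear_combination expSeries c loc v 0 * hsum - expSeries c loc v γ * hβ

lemma dlog_expSeries_add_nsmul [Finite σ] [CharZero K]
    (E : Derivation K (MvPowerSeries σ K) (MvPowerSeries σ K)) (β γ : ι → ℤ) (k : ℕ) :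
    dlog E (expSeries c loc v (β + k • γ)) = dlog E (expSeries c loc v β) +
      k • (dlog E (expSeries c loc v γ) - dlog E (expSeries c loc v 0)) := by
  induction k with
  | zero => simp
  | succ k ih =>
    have h := congrArg (dlog E)
      (expSeries_add_mul_expSeries_zero (c := c) (loc := loc) (v := v) (β + k • γ) γ)
    rw [dlog_mul _ (isUnit_expSeries _) (isUnit_expSeries _),
      dlog_mul _ (isUnit_expSeries _) (isUnit_expSeries _), ih, add_assoc β,
      ← succ_nsmul] at h
    rw [succ_nsmul (_ - _) k]
    linear_combination h

end ExponentialFamily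

section Transport

variable {σ τ ι κ K : Type*}

lemma weight_pi_apply {M : Type*} [AddCommMonoid M] (v : σ → ι → M) (D : σ →₀ ℕ) (j : ι) :
    Finsupp.weight v D j = Finsupp.weight (v · j) D := by
  simp only [Finsupp.weight_apply, Finsupp.sum, Finset.sum_apply, Pi.smul_apply]

lemma weight_eq_zero_of_forall {M : Type*} [AddCommMonoid M] {v : σ → M} {D : σ →₀ ℕ}
    (h : ∀ x ∈ D.support, v x = 0) : Finsupp.weight v D = 0 := by
  rw [Finsupp.weight_apply]
  exact Finset.sum_eq_zero fun x hx => (congrArg _ (h x hx)).trans (smul_zero _)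

lemma weight_embDomain {M : Type*} [AddCommMonoid M] (e : σ ↪ τ) (v : τ → M) (D : σ →₀ ℕ) :
    Finsupp.weight v (D.embDomain e) = Finsupp.weight (v ∘ e) D :=
  Finsupp.linearCombination_embDomain ℕ e D

lemma localCount_eq_zero {loc : σ → ι} {D : σ →₀ ℕ} {j : ι} (h : ∀ x ∈ D.support, loc x ≠ j) :
    localCount loc D j = 0 := by
  rw [localCount, weight_pi_apply]
  exact weight_eq_zero_of_forall fun x hx => Pi.single_eq_of_ne (h x hx).symm 1

lemma localFactor_eq_one {loc : σ → ι} {v : σ → ι → ℤ} {D : σ →₀ ℕ} {j : ι} (β : ι → ℤ)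
    (h : ∀ x ∈ D.support, loc x ≠ j) : localFactor loc v β D j = 1 := by
  rw [localFactor, localCount_eq_zero h, shiftedRising_zero]

lemma localFactor_add_of_forall {loc : σ → ι} {v : σ → ι → ℤ} {A B : σ →₀ ℕ} {j : ι} (β : ι → ℤ)
    (hloc : ∀ x ∈ B.support, loc x ≠ j) (hv : ∀ x ∈ B.support, v x j = 0) :
    localFactor loc v β (A + B) j = localFactor loc v β A j * localFactor loc v β B j := by
  have hcount : localCount loc (A + B) j = localCount loc A j := by
    rw [localCount, map_add, Pi.add_apply, ← localCount, ← localCount, localCount_eq_zero hloc,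
      add_zero]
  have hweight : Finsupp.weight v (A + B) j = Finsupp.weight v A j := by
    rw [map_add, Pi.add_apply, weight_pi_apply v B, weight_eq_zero_of_forall hv, add_zero]
  rw [localFactor_eq_one β hloc, mul_one, localFactor, hcount, hweight, localFactor]

lemma localFactor_embDomain {loc : σ → ι} {v : σ → ι → ℤ} {loc' : τ → κ} {v' : τ → κ → ℤ}
    {e : σ ↪ τ} {f : ι ↪ κ} (hloc : ∀ x, loc' (e x) = f (loc x))
    (hv : ∀ x j, v' (e x) (f j) = v x j) (β : κ → ℤ) (D : σ →₀ ℕ) (j : ι) :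
    localFactor loc' v' β (D.embDomain e) (f j) = localFactor loc v (β ∘ f) D j := by
  have hsingle (x : σ) :
      (Pi.single (loc' (e x)) 1 : κ → ℕ) (f j) = (Pi.single (loc x) 1 : ι → ℕ) j := by
    simp only [Pi.single_apply, hloc, f.injective.eq_iff]
  simp only [localFactor, localCount, weight_pi_apply, weight_embDomain, Function.comp_def, hv,
    hsingle]

variable [Field K]

lemma hasFiniteMulSupport_localFactor (loc : σ → ι) (v : σ → ι → ℤ) (β : ι → ℤ) (D : σ →₀ ℕ) :
    (fun j => (localFactor loc v β D j : K)).HasFiniteMulSupport := by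
  refine (D.support.image loc).finite_toSet.subset fun j hj => ?_
  by_contra hloc
  refine hj ?_
  dsimp only
  rw [localFactor_eq_one β, Int.cast_one]
  rintro x hx rfl
  exact hloc (Finset.mem_image_of_mem loc hx)

lemma finprod_localFactor_embDomain [Fintype ι] {loc : σ → ι} {v : σ → ι → ℤ} {loc' : τ → κ}
    {v' : τ → κ → ℤ} {e : σ ↪ τ} {f : ι ↪ κ} (hloc : ∀ x, loc' (e x) = f (loc x))
    (hv : ∀ x j, v' (e x) (f j) = v x j) (β : κ → ℤ) (D : σ →₀ ℕ) :
    ∏ᶠ j, (localFactor loc' v' β (D.embDomain e) j : K) =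
      ∏ j, (localFactor loc v (β ∘ f) D j : K) := by
  rw [finprod_eq_prod_of_mulSupport_subset (s := Finset.univ.map f), Finset.prod_map]
  · simp only [localFactor_embDomain hloc hv]
  · intro j hj
    by_contra hjf
    refine hj ?_
    dsimp only
    rw [localFactor_eq_one β, Int.cast_one]
    rintro _ hx rfl
    obtain ⟨x, -, rfl⟩ := Finset.mem_map.mp (Finsupp.support_embDomain e D ▸ hx)
    exact hjf (by simp [hloc])

lemma multinomialWeight_add {c : σ → K} {A B : σ →₀ ℕ} (h : Disjoint A.support B.support) :
    multinomialWeight c (A + B) = multinomialWeight c A * multinomialWeight c B :=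
  Finsupp.prod_add_index_of_disjoint h _

lemma multinomialWeight_embDomain (c : τ → K) (e : σ ↪ τ) (D : σ →₀ ℕ) :
    multinomialWeight c (D.embDomain e) = multinomialWeight (c ∘ e) D :=
  Finsupp.prod_embDomain

lemma killCompl_eulerDeriv {R : Type*} [CommRing R] (e : σ ↪ τ) (c : τ → ℕ)
    (φ : MvPowerSeries τ R) :
    MvPowerSeries.killCompl e (eulerDeriv R c φ) =
      eulerDeriv R (c ∘ e) (MvPowerSeries.killCompl e φ) := by
  ext D
  simp only [MvPowerSeries.coeff_killCompl, coeff_eulerDeriv, weight_embDomain]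

end Transport

section LongEdgeGraphs

/-- The ambient type of the quadruples `(a, b, w, i)`: an edge with endpoints `a < b` and weight
`w`, assigned to the interval `[i, i + 1]`. -/
abbrev LongEdge := ℕ × ℕ × ℕ × ℕ

/-- The contribution of an edge to the cogenus. -/
def edgeCogenus (x : LongEdge) : ℕ :=
  (x.2.1 - x.1) * x.2.2.1 - 1

/-- The contribution of an edge to the multiplicity `μ`. -/
def edgeMult (x : LongEdge) : ℚ :=
  (x.2.2.1 : ℚ) ^ 2

/-- The interval, encoded by its left end, to which an edge is assigned. -/
def edgeInterval (x : LongEdge) : ℕ :=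
  x.2.2.2

/-- The contribution of an edge to the total weight over the interval `[j, j + 1]`. -/
def crossingWeight (x : LongEdge) (j : ℕ) : ℕ :=
  if x.1 ≤ j ∧ j < x.2.1 then x.2.2.1 else 0

lemma cogD_eq_weight (D : LongEdge →₀ ℕ) : cogD D = Finsupp.weight edgeCogenus D :=
  rfl

lemma wjD_eq_weight (D : LongEdge →₀ ℕ) (j : ℕ) :
    wjD D j = Finsupp.weight (crossingWeight · j) D := by
  rw [wjD, Finset.sum_filter, Finsupp.weight_apply]
  refine Finset.sum_congr rfl fun x _ => ?_
  dsimp only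
  rw [smul_eq_mul, mul_comm, crossingWeight, mul_ite, mul_zero]

lemma natCast_wjD (D : LongEdge →₀ ℕ) (j : ℕ) :
    (wjD D j : ℤ) = Finsupp.weight (fun x j => (crossingWeight x j : ℤ)) D j := by
  rw [wjD_eq_weight, weight_pi_apply, Finsupp.weight_apply, Finsupp.weight_apply]
  exact map_finsuppSum (Nat.castAddMonoidHom ℤ) _ _ |>.trans (by simp)

lemma mjD_eq_localCount (D : LongEdge →₀ ℕ) (j : ℕ) : mjD D j = localCount edgeInterval D j := by
  rw [mjD, Finset.sum_filter, localCount, weight_pi_apply, Finsupp.weight_apply]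
  refine Finset.sum_congr rfl fun x _ => ?_
  simp [Pi.single_apply, edgeInterval, eq_comm]

lemma ValidX.edgeCogenus_pos {x : LongEdge} (hx : ValidX x) : 0 < edgeCogenus x := by
  obtain ⟨hai, hib, hw, hlong⟩ := hx
  have hlen : 1 ≤ x.2.1 - x.1 := by omega
  refine Nat.sub_pos_of_lt ?_
  by_contra! hle
  have hlen1 : x.2.1 - x.1 = 1 := by nlinarith
  rw [hlen1, one_mul] at hle
  exact hlong ⟨by omega, by omega⟩

lemma ValidX.weight_le {x : LongEdge} (hx : ValidX x) : x.2.2.1 ≤ edgeCogenus x + 1 := by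
  have hle : x.2.2.1 ≤ (x.2.1 - x.1) * x.2.2.1 :=
    Nat.le_mul_of_pos_left _ (Nat.sub_pos_of_lt (hx.1.trans_lt hx.2.1))
  exact hle.trans le_tsub_add

lemma ValidX.right_le {x : LongEdge} (hx : ValidX x) : x.2.1 ≤ x.1 + edgeCogenus x + 1 := by
  have hlen : x.2.1 - x.1 ≤ (x.2.1 - x.1) * x.2.2.1 := Nat.le_mul_of_pos_right _ hx.2.2.1
  have hcog : (x.2.1 - x.1) * x.2.2.1 ≤ edgeCogenus x + 1 := le_tsub_add
  omega

lemma edgeCogenus_le_cogD {D : LongEdge →₀ ℕ} {x : LongEdge} (hx : x ∈ D.support) :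
    edgeCogenus x ≤ cogD D :=
  Finsupp.le_weight_of_ne_zero' edgeCogenus (Finsupp.mem_support_iff.mp hx)

lemma IsEncoding.wjD_le {D : LongEdge →₀ ℕ} (hD : IsEncoding D) (j : ℕ) :
    wjD D j ≤ 2 * cogD D := by
  rw [wjD_eq_weight, cogD_eq_weight, Finsupp.weight_apply, Finsupp.weight_apply, Finsupp.sum,
    Finsupp.sum, Finset.mul_sum]
  refine Finset.sum_le_sum fun x hx => ?_
  have hcross : crossingWeight x j ≤ x.2.2.1 := by
    unfold crossingWeight
    split_ifs <;> simp
  have hweight := (hD x hx).weight_le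
  have hpos := (hD x hx).edgeCogenus_pos
  rw [smul_eq_mul, smul_eq_mul, mul_left_comm]
  exact Nat.mul_le_mul_left _ (by omega)

/-- The value of `N^d(D)` for graphs allowable for `d`; it does not depend on `d`. -/
noncomputable def graphWeight (D : LongEdge →₀ ℕ) : ℚ :=
  multinomialWeight edgeMult D *
    ∏ᶠ j, (localFactor edgeInterval (fun x j => (crossingWeight x j : ℤ)) (↑) D j : ℚ)

lemma Nd_eq_ite (d : ℕ) (D : LongEdge →₀ ℕ) :
    Nd d D = if AllowD d D then graphWeight D else 0 := by
  have hmult : muD D / alphaD D = multinomialWeight edgeMult D := by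
    rw [muD, alphaD, multinomialWeight, Finsupp.prod, ← Finset.prod_div_distrib]
    simp only [edgeMult, pow_mul]
  rw [Nd, graphWeight, hmult]
  simp only [localFactor, shiftedRising, ← mjD_eq_localCount, ← natCast_wjD]

/-- The long-edge graphs with distribution `D` whose weights satisfy `w_j(D) ≤ j` for all `j`. -/
def IsStable (D : LongEdge →₀ ℕ) : Prop :=
  IsEncoding D ∧ ∀ j, wjD D j ≤ j

lemma IsEncoding.mono {A D : LongEdge →₀ ℕ} (hD : IsEncoding D) (hA : A ≤ D) : IsEncoding A :=
  fun x hx => hD x (Finsupp.support_mono hA hx)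

lemma IsStable.mono {A D : LongEdge →₀ ℕ} (hD : IsStable D) (hA : A ≤ D) : IsStable A := by
  obtain ⟨B, rfl⟩ := exists_add_of_le hA
  refine ⟨hD.1.mono hA, fun j => le_trans ?_ (hD.2 j)⟩
  rw [wjD_eq_weight, wjD_eq_weight, map_add]
  exact Nat.le_add_right _ _

/-- The generating series of the weights `N^d(D)`, over the graphs allowable for some `d`. -/
noncomputable def stableSeries : MvPowerSeries LongEdge ℚ :=
  fun D => if IsStable D then graphWeight D else 0

lemma coeff_stableSeries (D : LongEdge →₀ ℕ) :
    MvPowerSeries.coeff D stableSeries = if IsStable D then graphWeight D else 0 :=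
  rfl

lemma constantCoeff_stableSeries : MvPowerSeries.constantCoeff stableSeries = 1 := by
  have hstable : IsStable 0 := ⟨fun x hx => by simp at hx, fun j => by simp [wjD]⟩
  rw [← MvPowerSeries.coeff_zero_eq_constantCoeff_apply, coeff_stableSeries, if_pos hstable,
    graphWeight, finprod_eq_one_of_forall_eq_one fun j => ?_]
  · simp [multinomialWeight]
  · rw [localFactor_eq_one _ (by simp), Int.cast_one]

lemma isUnit_stableSeries : IsUnit stableSeries :=
  MvPowerSeries.isUnit_iff_constantCoeff.mpr (constantCoeff_stableSeries ▸ isUnit_one)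

/-- The edges that may occur in a graph allowable for `d`. -/
def allowedEdges (d : ℕ) : Set LongEdge :=
  {x | ValidX x ∧ x.2.1 ≤ d + 1 ∧ (x.2.1 = d + 1 → x.2.2.1 = 1)}

lemma edgeCogenus_ne_zero_of_mem_allowedEdges {d : ℕ} (x : LongEdge) (hx : x ∈ allowedEdges d) :
    edgeCogenus x ≠ 0 :=
  hx.1.edgeCogenus_pos.ne'

lemma finite_allowedEdges_edgeCogenus_eq (d n : ℕ) :
    {x ∈ allowedEdges d | edgeCogenus x = n}.Finite := by
  refine ((Set.finite_Iic (d + 1, d + 1, n + 1, d + 1)).subset fun x hx => ?_)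
  obtain ⟨⟨hvalid, hd, -⟩, hn⟩ := hx
  have hweight := hvalid.weight_le
  obtain ⟨hai, hib, -⟩ := hvalid
  refine ⟨?_, hd, ?_, ?_⟩ <;> dsimp only <;> omega

lemma allowD_iff_isStable {d : ℕ} {D : LongEdge →₀ ℕ} (hD : ↑D.support ⊆ allowedEdges d) :
    AllowD d D ↔ IsStable D :=
  ⟨fun h => ⟨fun _ hx => (hD hx).1, h.2.2⟩,
    fun h => ⟨fun _ hx => (hD hx).2.1, fun _ hx => (hD hx).2.2, h.2⟩⟩

lemma NSev_eq_finsum {d n : ℕ} (hn : n ≠ 0) :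
    NSev d n = ∑ᶠ (D : LongEdge →₀ ℕ)
      (_ : ↑D.support ⊆ allowedEdges d ∧ Finsupp.weight edgeCogenus D = n),
      MvPowerSeries.coeff D stableSeries := by
  rw [NSev, if_neg hn]
  refine finsum_congr fun D => ?_
  rw [finsum_eq_if, finsum_eq_if, Nd_eq_ite, coeff_stableSeries, ← cogD_eq_weight]
  by_cases hD : ↑D.support ⊆ allowedEdges d
  · have hencoding : IsEncoding D := fun x hx => (hD hx).1
    simp only [hD, hencoding, allowD_iff_isStable hD]
  · rw [if_neg (c := _ ∧ _ = n) fun h => hD h.1, ite_eq_right_iff]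
    exact fun h => if_neg fun hallow =>
      hD fun x hx => ⟨h.1 x hx, hallow.1 x hx, hallow.2.1 x hx⟩

lemma mk_NSev_eq_subst (d : ℕ) :
    PowerSeries.mk (NSev d) =
      MvPowerSeries.subst (gradedVar ℚ edgeCogenus (allowedEdges d)) stableSeries := by
  refine PowerSeries.ext fun n => ?_
  rw [PowerSeries.coeff_mk, coeff_subst_gradedVar edgeCogenus_ne_zero_of_mem_allowedEdges
    (finite_allowedEdges_edgeCogenus_eq d)]
  obtain rfl | hn := eq_or_ne n 0
  · rw [NSev, if_pos rfl, finsum_eq_single _ 0 fun D hD => ?_]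
    · simp [constantCoeff_stableSeries]
    · obtain ⟨x, hx⟩ := Finsupp.support_nonempty_iff.mpr hD
      rw [finsum_eq_if, if_neg]
      rintro ⟨hsupp, hweight⟩
      have hle := edgeCogenus_le_cogD hx
      rw [cogD_eq_weight, hweight] at hle
      exact edgeCogenus_ne_zero_of_mem_allowedEdges x (hsupp hx) (Nat.le_zero.mp hle)
  · exact NSev_eq_finsum hn

/-- The set of graphs of cogenus `δ` all of whose edges may occur in a graph allowable for `d`. -/
def severiGraphs (δ d : ℕ) : Set (LongEdge →₀ ℕ) :=
  {D | ↑D.support ⊆ allowedEdges d ∧ Finsupp.weight edgeCogenus D = δ}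

lemma finite_severiGraphs (δ d : ℕ) : (severiGraphs δ d).Finite :=
  finite_setOf_support_subset_weight_eq edgeCogenus_ne_zero_of_mem_allowedEdges
    (finite_allowedEdges_edgeCogenus_eq d) δ

/-- The coefficient of `X ^ D` in the logarithmic derivative, for the cogenus grading, of the
generating series of stable graphs: the contribution of `D` to `δ(D) Q^{d,δ(D)}`. -/
noncomputable def logContribution (D : LongEdge →₀ ℕ) : ℚ :=
  MvPowerSeries.coeff D (dlog (eulerDeriv ℚ edgeCogenus) stableSeries)

lemma natCast_mul_QSev (d δ : ℕ) :
    δ * QSev d δ = ∑ᶠ D ∈ severiGraphs δ d, logContribution D := by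
  have hc := edgeCogenus_ne_zero_of_mem_allowedEdges (d := d)
  have hT := finite_allowedEdges_edgeCogenus_eq d
  have hconst : PowerSeries.constantCoeff (PowerSeries.mk (NSev d)) = 1 := by simp [NSev]
  have hQ : QSev d δ = PowerSeries.coeff δ (PowerSeries.logOf (PowerSeries.mk (NSev d))) := by
    simp only [coeff_logOf_eq_finsum_list hconst, PowerSeries.coeff_mk]
    rfl
  rw [hQ, ← coeff_eulerDeriv_unit, ← dlog_eulerDeriv_eq_eulerDeriv_logOf hconst,
    mk_NSev_eq_subst]
  refine .trans ?_ (coeff_subst_gradedVar hc hT _ δ)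
  have hmap := map_dlog (MvPowerSeries.substAlgHom (hasSubst_gradedVar (R := ℚ) hc hT)).toRingHom
    (E := eulerDeriv ℚ edgeCogenus) (E' := eulerDeriv ℚ fun _ : Unit => 1)
    (fun φ => by simpa [MvPowerSeries.coe_substAlgHom] using subst_gradedVar_eulerDeriv hc hT φ)
    isUnit_stableSeries
  simp only [AlgHom.toRingHom_eq_coe, RingHom.coe_coe, MvPowerSeries.coe_substAlgHom] at hmap
  rw [hmap]

end LongEdgeGraphs

section Separation

variable {A B D : LongEdge →₀ ℕ} {c : ℕ}

lemma crossingWeight_eq_zero_of_right_le {x : LongEdge} {j : ℕ} (h : x.2.1 ≤ j) :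
    crossingWeight x j = 0 :=
  if_neg fun hx => h.not_gt hx.2

lemma crossingWeight_eq_zero_of_lt_left {x : LongEdge} {j : ℕ} (h : j < x.1) :
    crossingWeight x j = 0 :=
  if_neg fun hx => hx.1.not_gt h

lemma graphWeight_add (hencA : IsEncoding A) (hencB : IsEncoding B)
    (hA : ∀ x ∈ A.support, x.2.1 ≤ c) (hB : ∀ x ∈ B.support, c ≤ x.1) :
    graphWeight (A + B) = graphWeight A * graphWeight B := by
  have hdisj : Disjoint A.support B.support := Finset.disjoint_left.mpr fun x hxA hxB =>
    ((hA x hxA).trans (hB x hxB)).not_gt ((hencA x hxA).1.trans_lt (hencA x hxA).2.1)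
  have hlocal (j : ℕ) :
      localFactor edgeInterval (fun x j => (crossingWeight x j : ℤ)) (↑) (A + B) j =
        localFactor edgeInterval (fun x j => (crossingWeight x j : ℤ)) (↑) A j *
          localFactor edgeInterval (fun x j => (crossingWeight x j : ℤ)) (↑) B j := by
    obtain hj | hj := lt_or_ge j c
    · refine localFactor_add_of_forall _ (fun x hx => ?_) fun x hx => ?_
      · exact (hj.trans_le ((hB x hx).trans (hencB x hx).1)).ne'
      · rw [crossingWeight_eq_zero_of_lt_left (hj.trans_le (hB x hx)), Nat.cast_zero]
    · rw [add_comm A B, mul_comm]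
      refine localFactor_add_of_forall _ (fun x hx => ?_) fun x hx => ?_
      · exact ((hencA x hx).2.1.trans_le ((hA x hx).trans hj)).ne
      · rw [crossingWeight_eq_zero_of_right_le ((hA x hx).trans hj), Nat.cast_zero]
  rw [graphWeight, graphWeight, graphWeight, multinomialWeight_add hdisj, mul_mul_mul_comm,
    ← finprod_mul_distrib (hasFiniteMulSupport_localFactor _ _ _ _)
      (hasFiniteMulSupport_localFactor _ _ _ _)]
  simp only [hlocal, Int.cast_mul]

lemma isStable_add_iff (hA : ∀ x ∈ A.support, x.2.1 ≤ c) (hB : ∀ x ∈ B.support, c ≤ x.1) :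
    IsStable (A + B) ↔ IsStable A ∧ IsStable B := by
  refine ⟨fun h => ⟨h.mono le_self_add, h.mono le_add_self⟩, fun ⟨hstA, hstB⟩ => ⟨?_, fun j => ?_⟩⟩
  · intro x hx
    obtain hx | hx := Finset.mem_union.mp (Finsupp.support_add hx)
    · exact hstA.1 x hx
    · exact hstB.1 x hx
  · have hadd : wjD (A + B) j = wjD A j + wjD B j := by simp only [wjD_eq_weight, map_add]
    obtain hj | hj := lt_or_ge j c
    · have hzero : wjD B j = 0 := (wjD_eq_weight B j).trans <| weight_eq_zero_of_forall fun x hx =>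
        crossingWeight_eq_zero_of_lt_left (hj.trans_le (hB x hx))
      simpa only [hadd, hzero, add_zero] using hstA.2 j
    · have hzero : wjD A j = 0 := (wjD_eq_weight A j).trans <| weight_eq_zero_of_forall fun x hx =>
        crossingWeight_eq_zero_of_right_le ((hA x hx).trans hj)
      simpa only [hadd, hzero, zero_add] using hstB.2 j

lemma coeff_stableSeries_add (hA : ∀ x ∈ A.support, x.2.1 ≤ c) (hB : ∀ x ∈ B.support, c ≤ x.1) :
    MvPowerSeries.coeff (A + B) stableSeries =
      MvPowerSeries.coeff A stableSeries * MvPowerSeries.coeff B stableSeries := by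
  simp only [coeff_stableSeries, isStable_add_iff hA hB, ite_and]
  split_ifs with hstA hstB
  · exact graphWeight_add hstA.1 hstB.1 hA hB
  · rw [mul_zero]
  · rw [zero_mul]
  · rw [zero_mul]

lemma logContribution_eq_zero_of_separated {x y : LongEdge} (hx : x ∈ D.support)
    (hy : y ∈ D.support) (hxc : x.2.1 ≤ c) (hyc : c < y.2.1)
    (hsep : ∀ z ∈ D.support, z.2.1 ≤ c ∨ c ≤ z.1) : logContribution D = 0 := by
  obtain ⟨S, hS⟩ : ∃ S : Set LongEdge, ∀ z, z ∈ S ↔ z.2.1 ≤ c := ⟨{z | z.2.1 ≤ c}, fun _ => .rfl⟩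
  refine coeff_dlog_eulerDeriv_eq_zero_of_splits S isUnit_stableSeries (fun A hA => ?_)
    ⟨x, hx, (hS x).mpr hxc⟩ ⟨y, hy, fun hyS => hyc.not_ge ((hS y).mp hyS)⟩
  rw [← coeff_stableSeries_add (c := c) (fun z hz => ?_) fun z hz => ?_,
    Finsupp.filter_add_filter_not]
  · exact (hS z).mp (Finset.mem_filter.mp hz).2
  · obtain ⟨hzA, hzc⟩ := Finset.mem_filter.mp hz
    exact (hsep z (Finsupp.support_mono hA hzA)).resolve_left fun h => hzc ((hS z).mpr h)

/-- If `D` contributes, every vertex strictly between two of its edge ends lies inside some edge of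
`D`, and an edge has at most as many interior vertices as its cogenus. -/
lemma right_le_left_add_of_logContribution_ne_zero (hD : IsEncoding D)
    (h : logContribution D ≠ 0) {x y : LongEdge} (hx : x ∈ D.support) (hy : y ∈ D.support) :
    y.2.1 ≤ x.1 + cogD D + 1 := by
  have hcover : Finset.Ioo x.1 y.2.1 ⊆ D.support.biUnion fun z => Finset.Ioo z.1 z.2.1 := by
    intro c hc
    obtain ⟨hxc, hyc⟩ := Finset.mem_Ioo.mp hc
    by_contra hsep
    simp only [Finset.mem_biUnion, Finset.mem_Ioo, not_exists, not_and] at hsep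
    have hsep' (z : LongEdge) (hz : z ∈ D.support) : z.2.1 ≤ c ∨ c ≤ z.1 :=
      (le_or_gt c z.1).symm.imp_left fun hzc => not_lt.mp (hsep z hz hzc)
    exact h (logContribution_eq_zero_of_separated hx hy
      ((hsep' x hx).resolve_right hxc.not_ge) hyc hsep')
  have hcard : (Finset.Ioo x.1 y.2.1).card ≤ cogD D := by
    refine (Finset.card_le_card hcover).trans (Finset.card_biUnion_le.trans ?_)
    refine Finset.sum_le_sum fun z hz => ?_
    have hright := (hD z hz).right_le
    have hmult : edgeCogenus z ≤ D z * edgeCogenus z :=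
      Nat.le_mul_of_pos_left _ (Nat.pos_of_ne_zero (Finsupp.mem_support_iff.mp hz))
    refine le_trans ?_ hmult
    rw [Nat.card_Ioo]
    omega
  rw [Nat.card_Ioo] at hcard
  omega

end Separation

section Translation

variable {D : LongEdge →₀ ℕ}

/-- Translation of edges by `k`. -/
def shiftEdge (k : ℕ) : LongEdge ↪ LongEdge where
  toFun x := (x.1 + k, x.2.1 + k, x.2.2.1, x.2.2.2 + k)
  inj' x y h := by simpa [Prod.ext_iff] using h

/-- Translation of graphs by `k`. -/
noncomputable def shiftGraph (k : ℕ) (D : LongEdge →₀ ℕ) : LongEdge →₀ ℕ :=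
  D.embDomain (shiftEdge k)

lemma shiftEdge_apply (k : ℕ) (x : LongEdge) :
    shiftEdge k x = (x.1 + k, x.2.1 + k, x.2.2.1, x.2.2.2 + k) :=
  rfl

lemma validX_shiftEdge {k : ℕ} {x : LongEdge} : ValidX (shiftEdge k x) ↔ ValidX x := by
  simp only [ValidX, shiftEdge_apply]
  omega

lemma edgeCogenus_comp_shiftEdge (k : ℕ) : edgeCogenus ∘ shiftEdge k = edgeCogenus := by
  funext x
  rw [Function.comp_apply, edgeCogenus, shiftEdge_apply, Nat.add_sub_add_right, edgeCogenus]

lemma crossingWeight_shiftEdge_add (k : ℕ) (x : LongEdge) (j : ℕ) :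
    crossingWeight (shiftEdge k x) (j + k) = crossingWeight x j := by
  simp [crossingWeight, shiftEdge_apply]

lemma isStable_shiftGraph (hD : IsStable D) (k : ℕ) : IsStable (shiftGraph k D) := by
  refine ⟨fun x hx => ?_, fun j => ?_⟩
  · obtain ⟨y, hy, rfl⟩ := Finset.mem_map.mp (Finsupp.support_embDomain (shiftEdge k) D ▸ hx)
    exact validX_shiftEdge.mpr (hD.1 y hy)
  · rw [wjD_eq_weight, shiftGraph, weight_embDomain]
    obtain hj | hj := lt_or_ge j k
    · refine (weight_eq_zero_of_forall fun x _ => ?_).trans_le (Nat.zero_le j)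
      exact crossingWeight_eq_zero_of_lt_left (hj.trans_le (Nat.le_add_left k x.1))
    · obtain ⟨i, rfl⟩ := Nat.exists_eq_add_of_le' hj
      simp only [Function.comp_def, crossingWeight_shiftEdge_add]
      rw [← wjD_eq_weight]
      exact (hD.2 i).trans (Nat.le_add_right i k)

lemma logContribution_embDomain {σ ι : Type*} [Fintype ι] {e : σ ↪ LongEdge} {f : ι ↪ ℕ}
    {loc : σ → ι} {v : σ → ι → ℤ} (hloc : ∀ x, edgeInterval (e x) = f (loc x))
    (hv : ∀ x j, (crossingWeight (e x) (f j) : ℤ) = v x j) {A : σ →₀ ℕ}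
    (hA : IsStable (A.embDomain e)) :
    logContribution (A.embDomain e) = MvPowerSeries.coeff A
      (dlog (eulerDeriv ℚ (edgeCogenus ∘ e)) (expSeries (edgeMult ∘ e) loc v fun i => f i)) := by
  rw [logContribution, ← MvPowerSeries.coeff_killCompl]
  have hmap := map_dlog (MvPowerSeries.killCompl e).toRingHom
    (killCompl_eulerDeriv e edgeCogenus) isUnit_stableSeries
  simp only [AlgHom.toRingHom_eq_coe, RingHom.coe_coe] at hmap
  rw [hmap]
  refine coeff_dlog_eulerDeriv_congr (isUnit_stableSeries.map _) (isUnit_expSeries _)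
    fun B hB => ?_
  rw [MvPowerSeries.coeff_killCompl, coeff_stableSeries,
    if_pos (hA.mono (Finsupp.embDomain_mono e hB)), graphWeight, multinomialWeight_embDomain,
    finprod_localFactor_embDomain hloc hv, coeff_expSeries]
  rfl

lemma exists_logContribution_shiftGraph_eq (hD : IsStable D) :
    ∃ p q : ℚ, ∀ k : ℕ, logContribution (shiftGraph k D) = p + k * q := by
  let e : D.support ↪ LongEdge := Function.Embedding.subtype _
  let f : D.support.image edgeInterval ↪ ℕ := Function.Embedding.subtype _
  let loc (x : D.support) : D.support.image edgeInterval :=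
    ⟨edgeInterval x, Finset.mem_image_of_mem _ x.2⟩
  let v (x : D.support) (j : D.support.image edgeInterval) : ℤ := crossingWeight x j
  let E := eulerDeriv ℚ (edgeCogenus ∘ e)
  let Z := expSeries (edgeMult ∘ e) loc v
  obtain ⟨A, hA⟩ : ∃ A : D.support →₀ ℕ, A.embDomain e = D :=
    ⟨D.comapDomain e e.injective.injOn, Finsupp.embDomain_comapDomain fun x hx => ⟨⟨x, hx⟩, rfl⟩⟩
  refine ⟨MvPowerSeries.coeff A (dlog E (Z fun i => f i)),
    MvPowerSeries.coeff A (dlog E (Z 1) - dlog E (Z 0)), fun k => ?_⟩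
  have hshift : shiftGraph k D = A.embDomain (e.trans (shiftEdge k)) := by
    rw [Finsupp.embDomain_trans_apply, hA, shiftGraph]
  have hβ : (fun i => ((f.trans (addRightEmbedding k)) i : ℤ)) = (fun i => (f i : ℤ)) + k • 1 := by
    funext i
    simp
  rw [hshift, logContribution_embDomain (e := e.trans (shiftEdge k))
      (f := f.trans (addRightEmbedding k)) (loc := loc) (v := v) (fun x => rfl)
      (fun x j => congrArg Nat.cast (crossingWeight_shiftEdge_add k x j))
      (hshift ▸ isStable_shiftGraph hD k),
    hβ]
  have hcog : edgeCogenus ∘ e.trans (shiftEdge k) = edgeCogenus ∘ e :=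
    congrArg (· ∘ e) (edgeCogenus_comp_shiftEdge k)
  have hmult : edgeMult ∘ e.trans (shiftEdge k) = edgeMult ∘ e := rfl
  rw [hcog, hmult, dlog_expSeries_add_nsmul, map_add, map_nsmul, nsmul_eq_mul]

end Translation

section Boundary

variable {δ d : ℕ} {D : LongEdge →₀ ℕ}

lemma severiGraphs_subset_succ (δ d : ℕ) : severiGraphs δ d ⊆ severiGraphs δ (d + 1) := by
  refine fun D hD => ⟨hD.1.trans ?_, hD.2⟩
  rintro x ⟨hvalid, hd, -⟩
  exact ⟨hvalid, by omega, fun _ => by omega⟩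

/-- The graphs of cogenus `δ` that become possible when passing from degree `d` to `d + 1`, and have
no edge starting far from the vertex `d`. -/
def boundaryGraphs (δ d : ℕ) : Set (LongEdge →₀ ℕ) :=
  {D ∈ severiGraphs δ (d + 1) \ severiGraphs δ d | ∀ x ∈ D.support, d ≤ x.1 + δ}

lemma exists_lt_right_of_mem_diff (hD : D ∈ severiGraphs δ (d + 1) \ severiGraphs δ d) :
    ∃ y ∈ D.support, d < y.2.1 := by
  by_contra! hle
  refine hD.2 ⟨fun x hx => ⟨(hD.1.1 hx).1, (hle x hx).trans d.le_succ, fun hxd => ?_⟩, hD.1.2⟩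
  exact absurd hxd (Nat.lt_succ_of_le (hle x hx)).ne

lemma natCast_mul_QSev_succ_sub (d δ : ℕ) :
    δ * QSev (d + 1) δ - δ * QSev d δ = ∑ᶠ D ∈ boundaryGraphs δ d, logContribution D := by
  rw [natCast_mul_QSev, natCast_mul_QSev,
    ← finsum_mem_add_sdiff (severiGraphs_subset_succ δ d) (finite_severiGraphs δ (d + 1)),
    add_sub_cancel_left]
  refine finsum_mem_inter_support_eq' _ _ _ fun D hne => ⟨fun hD => ⟨hD, fun x hx => ?_⟩, And.left⟩
  obtain ⟨y, hy, hdy⟩ := exists_lt_right_of_mem_diff hD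
  have hspan := right_le_left_add_of_logContribution_ne_zero (fun z hz => (hD.1.1 hz).1) hne hx hy
  rw [cogD_eq_weight, hD.1.2] at hspan
  omega

lemma shiftEdge_mem_allowedEdges {k : ℕ} {x : LongEdge} :
    shiftEdge k x ∈ allowedEdges (d + k) ↔ x ∈ allowedEdges d := by
  refine and_congr validX_shiftEdge ?_
  simp only [shiftEdge_apply]
  omega

lemma shiftGraph_mem_severiGraphs {k : ℕ} :
    shiftGraph k D ∈ severiGraphs δ (d + k) ↔ D ∈ severiGraphs δ d := by
  refine and_congr ?_ ?_
  · simp only [shiftGraph, Finsupp.support_embDomain, Finset.coe_map, Set.image_subset_iff]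
    exact forall₂_congr fun x _ => shiftEdge_mem_allowedEdges
  · rw [shiftGraph, weight_embDomain, edgeCogenus_comp_shiftEdge]

lemma shiftGraph_mem_boundaryGraphs {k : ℕ} :
    shiftGraph k D ∈ boundaryGraphs δ (d + k) ↔ D ∈ boundaryGraphs δ d := by
  refine and_congr (and_congr ?_ shiftGraph_mem_severiGraphs.not) ?_
  · rw [add_right_comm, shiftGraph_mem_severiGraphs]
  · simp only [shiftGraph, Finsupp.support_embDomain, Finset.forall_mem_map, shiftEdge_apply]
    exact forall₂_congr fun x _ => by omega

lemma shiftGraph_injective (k : ℕ) : Function.Injective (shiftGraph k) :=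
  Finsupp.embDomain_injective (shiftEdge k)

lemma mem_range_shiftGraph {k : ℕ} (hD : IsEncoding D) (hk : ∀ x ∈ D.support, k ≤ x.1) :
    D ∈ Set.range (shiftGraph k) := by
  refine ⟨D.comapDomain (shiftEdge k) (shiftEdge k).injective.injOn,
    Finsupp.embDomain_comapDomain fun x hx => ?_⟩
  have hkx := hk x hx
  obtain ⟨hai, hib, -⟩ := hD x hx
  refine ⟨(x.1 - k, x.2.1 - k, x.2.2.1, x.2.2.2 - k), ?_⟩
  rw [shiftEdge_apply, Nat.sub_add_cancel hkx, Nat.sub_add_cancel (by omega),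
    Nat.sub_add_cancel (by omega)]

lemma boundaryGraphs_add (hd : δ ≤ d) (k : ℕ) :
    boundaryGraphs δ (d + k) = shiftGraph k '' boundaryGraphs δ d := by
  ext D
  refine ⟨fun hD => ?_, ?_⟩
  · obtain ⟨A, rfl⟩ := mem_range_shiftGraph (k := k) (fun x hx => (hD.1.1.1 hx).1)
      fun x hx => by have := hD.2 x hx; omega
    exact ⟨A, shiftGraph_mem_boundaryGraphs.mp hD, rfl⟩
  · rintro ⟨A, hA, rfl⟩
    exact shiftGraph_mem_boundaryGraphs.mpr hA

lemma isStable_of_mem_boundaryGraphs (hd : 3 * δ ≤ d) (hD : D ∈ boundaryGraphs δ d) :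
    IsStable D := by
  have hencoding : IsEncoding D := fun x hx => (hD.1.1.1 hx).1
  refine ⟨hencoding, fun j => ?_⟩
  obtain hj | hj := lt_or_ge (j + δ) d
  · rw [wjD_eq_weight, weight_eq_zero_of_forall fun x hx => ?_]
    · exact Nat.zero_le j
    · have := hD.2 x hx
      exact crossingWeight_eq_zero_of_lt_left (by omega)
  · have hle := hencoding.wjD_le j
    rw [cogD_eq_weight, hD.1.1.2] at hle
    omega

lemma exists_natCast_mul_QSev_succ_sub_eq (hd : 3 * δ ≤ d) :
    ∃ p q : ℚ, ∀ k : ℕ, δ * QSev (d + k + 1) δ - δ * QSev (d + k) δ = p + k * q := by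
  have hfin : (boundaryGraphs δ d).Finite :=
    (finite_severiGraphs δ (d + 1)).subset fun D hD => hD.1.1
  choose! p q hpq using fun D (hD : D ∈ boundaryGraphs δ d) =>
    exists_logContribution_shiftGraph_eq (isStable_of_mem_boundaryGraphs hd hD)
  refine ⟨∑ᶠ D ∈ boundaryGraphs δ d, p D, ∑ᶠ D ∈ boundaryGraphs δ d, q D, fun k => ?_⟩
  rw [natCast_mul_QSev_succ_sub, boundaryGraphs_add (by omega),
    finsum_mem_image (shiftGraph_injective k).injOn, mul_finsum_mem,
    ← finsum_mem_add_distrib hfin]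
  exact finsum_mem_congr rfl fun D hD => hpq D hD k

end Boundary

section Quadratic

variable {K : Type*} [Field K] [CharZero K]

lemma eq_quadratic_of_succ_sub_eq {f : ℕ → K} {p q : K} {d₀ : ℕ}
    (hf : ∀ k : ℕ, f (d₀ + k + 1) - f (d₀ + k) = p + k * q) (k : ℕ) :
    f (d₀ + k) = f d₀ + k * p + k * (k - 1) / 2 * q := by
  induction k with
  | zero => simp
  | succ k ih =>
    rw [← add_assoc, sub_eq_iff_eq_add.mp (hf k), ih]
    push_cast
    ring

lemma exists_eq_quadratic_of_succ_sub_eq {f : ℕ → K} {p q : K} {d₀ : ℕ}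
    (hf : ∀ k : ℕ, f (d₀ + k + 1) - f (d₀ + k) = p + k * q) :
    ∃ a b c : K, ∀ d : ℕ, d₀ ≤ d → f d = a * (d : K) ^ 2 + b * d + c := by
  refine ⟨q / 2, p - q * d₀ - q / 2, f d₀ - d₀ * p + d₀ * (d₀ + 1) / 2 * q, fun d hd => ?_⟩
  obtain ⟨k, rfl⟩ := Nat.exists_eq_add_of_le hd
  rw [eq_quadratic_of_succ_sub_eq hf]
  push_cast
  ring

end Quadratic

/-- For each positive `δ`, `Q^{d,δ}` is quadratic in `d` for `d` sufficiently large. -/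
theorem QSev_quadratic (δ : ℕ) (hδ : 0 < δ) :
    ∃ (a b c : ℚ) (d₀ : ℕ), ∀ d : ℕ, d₀ ≤ d →
      QSev d δ = a * (d : ℚ) ^ 2 + b * (d : ℚ) + c := by
  obtain ⟨p, q, hpq⟩ := exists_natCast_mul_QSev_succ_sub_eq (le_refl (3 * δ))
  obtain ⟨a, b, c, habc⟩ := exists_eq_quadratic_of_succ_sub_eq (f := fun d => δ * QSev d δ) hpq
  have hδ0 : (δ : ℚ) ≠ 0 := Nat.cast_ne_zero.mpr hδ.ne'
  refine ⟨a / δ, b / δ, c / δ, 3 * δ, fun d hd => ?_⟩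
  rw [← mul_right_inj' hδ0, habc d hd]
  field_simp
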